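/- Let N ≥ 2 be an integer. If α is an additive group automorphism of ℤ × ℤ[1/N] satisfying α(1, 0) = (1, 0), then there exists a unit u of ℤ[1/N] such that α(a, q) = (a, u·q) for all (a, q) ∈ ℤ × ℤ[1/N]. -/

import Mathlib

/-!
A nonzero homomorphism from a subgroup `H` of `ℚ` to a torsion-free group is injective, so a
non-cyclic `H` has only the zero homomorphism to `ℤ`. Hence an endomorphism of `ℤ × H` fixing
`(1, 0)` preserves `0 × H`, and there it is multiplication by the second coordinate `u` of the
image of `(0, 1)`. If the endomorphism is surjective, the second coordinate of a preimage of
`(0, 1)` is an inverse of `u`. Finally, `ℤ[1/N]` is not cyclic, since it is nonzero and stable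
under multiplication by the non-integer `1/N`.
-/

theorem smul_map_comm_of_addSubgroup_rat {M : Type*} [AddCommGroup M] [Module ℚ M]
    {H : AddSubgroup ℚ} (f : H →+ M) (x y : H) : (y : ℚ) • f x = (x : ℚ) • f y := by
  obtain ⟨x, hx⟩ := x
  obtain ⟨y, hy⟩ := y
  have common_multiple :
      (y.num * x.den) • (⟨x, hx⟩ : H) = (x.num * y.den) • (⟨y, hy⟩ : H) := by
    ext
    simp only [AddSubgroup.coe_zsmul, zsmul_eq_mul, Int.cast_mul, Int.cast_natCast]
    rw [mul_assoc, Rat.den_mul_eq_num, mul_assoc, Rat.den_mul_eq_num, mul_comm]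
  have map_common_multiple :
      ((y.num * x.den : ℤ) : ℚ) • f ⟨x, hx⟩ = ((x.num * y.den : ℤ) : ℚ) • f ⟨y, hy⟩ := by
    simpa only [map_zsmul, Int.cast_smul_eq_zsmul] using congrArg f common_multiple
  have den_ne_zero : (x.den * y.den : ℚ) ≠ 0 := by positivity
  apply smul_right_injective M den_ne_zero
  convert map_common_multiple using 1 <;>
    simp only [smul_smul, Int.cast_mul, Int.cast_natCast, ← Rat.den_mul_eq_num] <;>
    ring_nf

theorem addMonoidHom_int_eq_zero_of_not_isAddCyclic {H : AddSubgroup ℚ}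
    (hH : ¬ IsAddCyclic H) (f : H →+ ℤ) : f = 0 := by
  by_contra hf
  obtain ⟨x, hx⟩ := DFunLike.ne_iff.mp hf
  refine hH (isAddCyclic_of_injective f ((injective_iff_map_eq_zero f).mpr fun y hy => ?_))
  have comm : (y : ℚ) * f x = x * f y :=
    smul_map_comm_of_addSubgroup_rat ((Int.castAddHom ℚ).comp f) x y
  have fx_ne_zero : (f x : ℚ) ≠ 0 := Int.cast_ne_zero.mpr hx
  simpa [hy, fx_ne_zero] using comm

theorem not_isAddCyclic_of_mul_mem {K : Type*} [DivisionRing K] {H : AddSubgroup K}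
    (hH : H ≠ ⊥) {d : K} (hd : ∀ m : ℤ, (m : K) ≠ d) (hmul : ∀ x ∈ H, d * x ∈ H) :
    ¬ IsAddCyclic H := by
  rw [AddSubgroup.isAddCyclic_iff_exists_zmultiples_eq_top]
  rintro ⟨g, rfl⟩
  have g_ne_zero : g ≠ 0 := mt AddSubgroup.zmultiples_eq_bot.mpr hH
  obtain ⟨m, hm⟩ := AddSubgroup.mem_zmultiples_iff.mp
    (hmul g (AddSubgroup.mem_zmultiples g))
  rw [zsmul_eq_mul] at hm
  exact hd m (mul_right_cancel₀ g_ne_zero hm)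

theorem intCast_ne_inv_natCast {N : ℕ} (hN : 2 ≤ N) (m : ℤ) : (m : ℚ) ≠ (N : ℚ)⁻¹ := by
  intro hm
  have cast_ne_zero : (N : ℚ) ≠ 0 := by positivity
  have mul_eq_one : (N : ℤ) * m = 1 := by
    exact_mod_cast (hm ▸ mul_inv_cancel₀ cast_ne_zero : (N : ℚ) * m = 1)
  have : N = 1 := Nat.isUnit_iff.mp (Int.ofNat_isUnit.mp (.of_mul_eq_one m mul_eq_one))
  lia

theorem prod_int_map_eq_of_map_one_zero {G G' : Type*} [AddMonoid G] [AddMonoid G']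
    (hG : ∀ φ : G →+ ℤ, φ = 0) (f : ℤ × G →+ ℤ × G') (hf : f (1, 0) = (1, 0))
    (a : ℤ) (x : G) : f (a, x) = (a, (f (0, x)).2) := by
  have map_inl : f (a, 0) = (a, 0) :=
    DFunLike.congr_fun (AddMonoidHom.ext_int hf :
      f.comp (AddMonoidHom.inl ℤ G) = AddMonoidHom.inl ℤ G') a
  have fst_map_inr : (f (0, x)).1 = 0 :=
    DFunLike.congr_fun (hG ((AddMonoidHom.fst ℤ G').comp (f.comp (AddMonoidHom.inr ℤ G)))) x
  calc f (a, x) = f (a, 0) + f (0, x) := by rw [← map_add, Prod.mk_add_mk, add_zero, zero_add]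
    _ = (a, (f (0, x)).2) := by ext <;> simp [map_inl, fst_map_inr]

theorem prod_int_map_eq_mul_of_map_one_zero {H : AddSubgroup ℚ} (h1 : (1 : ℚ) ∈ H)
    (hH : ¬ IsAddCyclic H) (f : ℤ × H →+ ℤ × H) (hf : f (1, 0) = (1, 0)) (a : ℤ) (q : H) :
    (f (a, q)).1 = a ∧ ((f (a, q)).2 : ℚ) = (f (0, ⟨1, h1⟩)).2 * q := by
  rw [prod_int_map_eq_of_map_one_zero (addMonoidHom_int_eq_zero_of_not_isAddCyclic hH) f hf]
  let g : H →+ ℚ :=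
    H.subtype.comp ((AddMonoidHom.snd ℤ H).comp (f.comp (AddMonoidHom.inr ℤ H)))
  have g_apply : g q = g ⟨1, h1⟩ * q := by
    simpa [mul_comm] using smul_map_comm_of_addSubgroup_rat g q ⟨1, h1⟩
  exact ⟨rfl, g_apply⟩

theorem one_mem_of_mem_iff_eq_div_pow {N : ℕ} {H : AddSubgroup ℚ}
    (hH : ∀ q : ℚ, q ∈ H ↔ ∃ a : ℤ, ∃ k : ℕ, q = (a : ℚ) / (N : ℚ) ^ k) : (1 : ℚ) ∈ H :=
  (hH 1).mpr ⟨1, 0, by simp⟩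

theorem not_isAddCyclic_of_mem_iff_eq_div_pow {N : ℕ} (hN : 2 ≤ N) {H : AddSubgroup ℚ}
    (hH : ∀ q : ℚ, q ∈ H ↔ ∃ a : ℤ, ∃ k : ℕ, q = (a : ℚ) / (N : ℚ) ^ k) :
    ¬ IsAddCyclic H := by
  have ne_bot : H ≠ ⊥ := fun h =>
    one_ne_zero (AddSubgroup.mem_bot.mp (h ▸ one_mem_of_mem_iff_eq_div_pow hH))
  refine not_isAddCyclic_of_mul_mem ne_bot (intCast_ne_inv_natCast hN) fun q hq => ?_
  obtain ⟨a, k, rfl⟩ := (hH q).mp hq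
  exact (hH _).mpr ⟨a, k + 1, by rw [pow_succ, ← div_div, inv_mul_eq_div]⟩

theorem stmt_4_general (H : AddSubgroup ℚ) (h1 : (1 : ℚ) ∈ H) (hH : ¬ IsAddCyclic H)
    (f : ℤ × H →+ ℤ × H) (hsurj : Function.Surjective f) (hf : f (1, 0) = (1, 0)) :
    ∃ u ∈ H, (∃ u' ∈ H, u * u' = 1) ∧
      ∀ (a : ℤ) (q : H), (f (a, q)).1 = a ∧ ((f (a, q)).2 : ℚ) = u * (q : ℚ) := by
  have f_apply := prod_int_map_eq_mul_of_map_one_zero h1 hH f hf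
  obtain ⟨⟨b, v⟩, f_v⟩ := hsurj (0, ⟨1, h1⟩)
  refine ⟨(f (0, ⟨1, h1⟩)).2, SetLike.coe_mem _, ⟨v, v.2, ?_⟩, f_apply⟩
  calc ((f (0, ⟨1, h1⟩)).2 : ℚ) * v = (f (b, v)).2 := (f_apply b v).2.symm
    _ = 1 := by rw [f_v]

/-- For `N ≥ 2`, every additive group automorphism `α` of
`ℤ × ℤ[1/N]` fixing `(1, 0)` has the form `α (a, q) = (a, u·q)` for some unit
`u` of `ℤ[1/N]`. -/
theorem stmt_4 (N : ℕ) (hN : 2 ≤ N) (H : AddSubgroup ℚ)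
    (hH : ∀ q : ℚ, q ∈ H ↔ ∃ a : ℤ, ∃ k : ℕ, q = (a : ℚ) / (N : ℚ) ^ k)
    (α : (ℤ × H) ≃+ (ℤ × H)) (hα : α (1, 0) = (1, 0)) :
    ∃ u ∈ H, (∃ u' ∈ H, u * u' = 1) ∧
      ∀ (a : ℤ) (q : H), (α (a, q)).1 = a ∧ ((α (a, q)).2 : ℚ) = u * (q : ℚ) := by
  exact stmt_4_general H (one_mem_of_mem_iff_eq_div_pow hH)
    (not_isAddCyclic_of_mem_iff_eq_div_pow hN hH) α.toAddMonoidHom α.surjective hα
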